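/- (Angle-reciprocity) Let λ > 0 and D > 0 be real numbers, and let θ₁, θ₂, θ₃, ΔΦ₁, ΔΦ₂ be real numbers with θ₁, θ₃ ∈ [−π/2, π/2]. Suppose there is an integer k such that −(2πD/λ) sin θ₂ = ΔΦ₁ + (2πD/λ) sin θ₁ + 2kπ and −(2πD/λ) sin θ₃ = ΔΦ₂ + (2πD/λ) sin θ₂ + 2kπ, and suppose ΔΦ₁ = ΔΦ₂. Then θ₃ = θ₁; that is, the reverse-incident wave from θ₂ is reflected back exactly along the forward incidence direction θ₁. -/

import Mathlib

open Real

/-- Angle-reciprocity: if ΔΦ₁ = ΔΦ₂ (same integer k in both beam-deflection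
equations) and θ₁, θ₃ ∈ [−π/2, π/2], then the reverse wave from θ₂ is reflected
back exactly along θ₁, i.e. θ₃ = θ₁. -/
theorem ris_angle_reciprocity
    (lam D : ℝ) (hlam : 0 < lam) (hD : 0 < D)
    (θ₁ θ₂ θ₃ ΔΦ₁ ΔΦ₂ : ℝ)
    (hθ₁ : θ₁ ∈ Set.Icc (-(Real.pi / 2)) (Real.pi / 2))
    (hθ₃ : θ₃ ∈ Set.Icc (-(Real.pi / 2)) (Real.pi / 2))
    (k : ℤ)
    (h1 : -(2 * Real.pi * D / lam) * Real.sin θ₂ =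
        ΔΦ₁ + (2 * Real.pi * D / lam) * Real.sin θ₁ + 2 * (k : ℝ) * Real.pi)
    (h2 : -(2 * Real.pi * D / lam) * Real.sin θ₃ =
        ΔΦ₂ + (2 * Real.pi * D / lam) * Real.sin θ₂ + 2 * (k : ℝ) * Real.pi)
    (hΔΦ : ΔΦ₁ = ΔΦ₂) :
    θ₃ = θ₁ := by
  have hc : (0 : ℝ) < 2 * Real.pi * D / lam := by positivity
  apply Real.injOn_sin hθ₃ hθ₁
  apply mul_left_cancel₀ hc.ne'
  linarith
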